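/- The maps Φ^{−q} form a chain map from the bar complex of A = O(U) to the Koszul complex: for every q ≥ 1 and all f₀, f₁, …, f_{q+1} ∈ A, d_K(Φ^{−q}(f₀ ⊗ f₁ ⊗ … ⊗ f_{q+1})) = Φ^{−(q−1)}(∂(f₀ ⊗ f₁ ⊗ … ⊗ f_{q+1})). -/

import Mathlib

/-!
Setting: `n ≥ 1`, `U ⊆ ℂⁿ` a nonempty convex open set.  Points of `U × U` are
written `p = (z, ζ)` with `z = p.1`, `ζ = p.2`.  For `0 ≤ q ≤ n`,
`K^{-q} = Λ^q(ℂⁿ) ⊗ O(U×U)` is encoded by the coefficients of its elements on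
the basis `e^I`, where the strictly increasing multi-indices
`I = (i₁ < … < i_q)` are encoded as finsets `I ⊆ Fin n` of cardinality `q`.
-/

open scoped BigOperators

namespace TwistedKoszul

variable (n : ℕ)

/-- Points of `ℂⁿ × ℂⁿ`. -/
abbrev Pt (n : ℕ) := (Fin n → ℂ) × (Fin n → ℂ)

/-- A family of coefficients, indexed by the basis vectors `e^I` of the
exterior algebra `Λ^•(ℂⁿ)` (strictly increasing multi-indices `I`, encoded as
finsets).  An element of `K^{-q}` is such a family supported on finsets of
cardinality `q`, with holomorphic coefficients (see `MemK`). -/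
abbrev Coeff (n : ℕ) := Finset (Fin n) → Pt n → ℂ

/-- The sign `(-1)^{#{i ∈ I | i < j}}`, so that `e^j ∧ e^I = sgn j I • e^{I ∪ {j}}`
for `j ∉ I`. -/
noncomputable def sgn (j : Fin n) (I : Finset (Fin n)) : ℂ :=
  (-1 : ℂ) ^ (I.filter (fun i => i < j)).card

/-- The holomorphic partial derivative `∂f/∂z^j` in the `j`-th coordinate of
the first factor. -/
noncomputable def pd (j : Fin n) (f : Pt n → ℂ) (p : Pt n) : ℂ :=
  fderiv ℂ f p (Pi.single j 1, 0)

/-- The Koszul differential `d_K : K^{-q} → K^{-q+1}`: contraction with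
`Σ_i (z^i - ζ^i) ě^i`, i.e. `d_K(f e^I) = Σ_r (-1)^{r-1} (z^{i_r} - ζ^{i_r}) f e^{I_r}`. -/
noncomputable def dK (ω : Coeff n) : Coeff n := fun J p =>
  ∑ j ∈ Jᶜ, sgn n j J * ((p.1 j - p.2 j) * ω (insert j J) p)

/-- The homotopy operator `P : K^{-q} → K^{-q-1}`:
`P(f e^I) = Σ_j (∫₀¹ t^{|I|} (∂f/∂z^j)(ζ + t(z - ζ), ζ) dt) e^j ∧ e^I`. -/
noncomputable def P (ω : Coeff n) : Coeff n := fun J p =>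
  ∑ j ∈ J, sgn n j (J.erase j) *
    ∫ t in (0:ℝ)..1, (t : ℂ) ^ (J.card - 1) *
      pd n j (ω (J.erase j)) (p.2 + t • (p.1 - p.2), p.2)

/-- The operator `res`: zero on `K^{-q}` for `q ≥ 1`, and
`res(f)(z, ζ) = f(ζ, ζ)` for `f ∈ K^0`. -/
noncomputable def res (ω : Coeff n) : Coeff n := fun J p =>
  if J = ∅ then ω ∅ (p.2, p.2) else 0

/-- The element of `K^0 = O(U×U)` determined by a single function. -/
noncomputable def ofFun (f : Pt n → ℂ) : Coeff n := fun J p => if J = ∅ then f p else 0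

/-- `ω` is an element of `K^{-q}` over `U × U`: it is supported on
multi-indices of length `q` and its coefficients are holomorphic on `U × U`. -/
noncomputable def MemK (U : Set (Fin n → ℂ)) (q : ℕ) (ω : Coeff n) : Prop :=
  (∀ I : Finset (Fin n), I.card ≠ q → ω I = 0) ∧
  ∀ I : Finset (Fin n), DifferentiableOn ℂ (ω I) (U ×ˢ U)

end TwistedKoszul

namespace TwistedKoszul

/-- The `i`-th face of the bar differential: merge the `i`-th and `(i+1)`-st
entries of a tensor `g₀ ⊗ … ⊗ g_m`, i.e.
`g₀ ⊗ … ⊗ g_i g_{i+1} ⊗ … ⊗ g_m`.  The bar differential is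
`∂(g) = Σ_{i=0}^{m-1} (-1)^i merge g i`. -/
def merge {A : Type*} [Mul A] {m : ℕ} (g : Fin (m + 1) → A) (i : Fin m) :
    Fin m → A := fun k =>
  if (k : ℕ) < (i : ℕ) then g k.castSucc
  else if k = i then g k.castSucc * g k.succ
  else g k.succ

/-- Replace the first and last entries of a tensor by `1`:
`f₀ ⊗ f₁ ⊗ … ⊗ f_q ⊗ f_{q+1} ↦ 1 ⊗ f₁ ⊗ … ⊗ f_q ⊗ 1`. -/
def bord {n m : ℕ} (f : Fin (m + 2) → ((Fin n → ℂ) → ℂ)) :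
    Fin (m + 2) → ((Fin n → ℂ) → ℂ) := fun k =>
  if k = 0 then 1 else if k = Fin.last (m + 1) then 1 else f k

variable (n : ℕ)

/-- The chain map `Φ^{-q} : B^{-q} = A^{⊗(q+2)} → K^{-q}` from the bar complex
of `A = O(U)` to the Koszul complex, defined on pure tensors by
`Φ^0(f₀ ⊗ f₁)(z, ζ) = f₀(z) f₁(ζ)` and
`Φ^{-q}(f₀ ⊗ … ⊗ f_{q+1}) = f₀(z) f_{q+1}(ζ) · P(Φ^{-(q-1)}(∂(1 ⊗ f₁ ⊗ … ⊗ f_q ⊗ 1)))`. -/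
noncomputable def Phi : (q : ℕ) → (Fin (q + 2) → ((Fin n → ℂ) → ℂ)) → Coeff n
  | 0, f => ofFun n (fun p => f 0 p.1 * f 1 p.2)
  | q + 1, f => fun J p =>
      f 0 p.1 * f (Fin.last (q + 2)) p.2 *
        P n (fun J' p' => ∑ i : Fin (q + 2), (-1 : ℂ) ^ (i : ℕ) *
          Phi q (merge (bord f) i) J' p') J p

end TwistedKoszul

namespace TwistedKoszul

/-!
The operator `P` is a contracting homotopy, `d_K P + P d_K = id - res`, by the fundamental theorem
of calculus applied to `t ↦ t^{|J|} ω_J(ζ + t(z - ζ), ζ)`. Hence `d_K (P ω) = ω` whenever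
`d_K ω = 0` and `res ω = 0`. By induction on `q`, `ω = Φ(∂(1 ⊗ f₁ ⊗ … ⊗ f_q ⊗ 1))` is such a cycle,
because `d_K Φ ∂ = Φ ∂ ∂ = 0`; and `∂`, `d_K` and `Φ` are all linear over the outer factors
`f₀(z)` and `f_{q+1}(ζ)`. Running the induction requires `P` to preserve holomorphy, which rests on
the Cauchy integral formula in one complex direction and on differentiation under the integral sign.
-/

section Analysis

open MeasureTheory Metric Set Filter Topology

variable {E G T : Type*} [NormedAddCommGroup E] [NormedSpace ℂ E]
  [NormedAddCommGroup G] [NormedSpace ℂ G] [TopologicalSpace T] {V : Set E}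

theorem exists_radius_forall_add_smul_mem {x₀ : E} (hV : V ∈ 𝓝 x₀) (v : E) :
    ∃ R > 0, ∃ W ∈ 𝓝 x₀, ∀ x ∈ W, ∀ z ∈ closedBall (0 : ℂ) R, x + z • v ∈ V := by
  have hlim : Tendsto (fun y : E × ℂ => y.1 + y.2 • v) (𝓝 (x₀, 0)) (𝓝 x₀) :=
    Continuous.tendsto' (by fun_prop) _ _ (by simp)
  have hev := hlim hV
  rw [nhds_prod_eq] at hev
  obtain ⟨W, hW, B, hB, hWB⟩ := mem_prod_iff.1 hev
  obtain ⟨R, hR, hRB⟩ := nhds_basis_closedBall.mem_iff.1 hB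
  exact ⟨R, hR, W, hW, fun x hx z hz => hWB (mk_mem_prod hx (hRB hz))⟩

theorem fderiv_apply_eq_circleAverage [CompleteSpace G] {g : E → G} {x v : E} {R : ℝ}
    (hR : 0 < R) (hg : ∀ z ∈ closedBall (0 : ℂ) R, DifferentiableAt ℂ g (x + z • v)) :
    fderiv ℂ g x v = Real.circleAverage (fun z => z⁻¹ • g (x + z • v)) 0 R := by
  have hline : ∀ z : ℂ, HasDerivAt (fun z : ℂ => x + z • v) v z := fun z => by
    simpa using ((hasDerivAt_id z).smul_const v).const_add x
  have hdiff : DifferentiableOn ℂ (fun z : ℂ => g (x + z • v)) (closedBall 0 R) := fun z hz =>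
    ((hg z hz).comp z (hline z).differentiableAt).differentiableWithinAt
  have hderiv : deriv (fun z : ℂ => g (x + z • v)) 0 = fderiv ℂ g x v := by
    have hg₀ := (hg 0 (mem_closedBall_self hR.le)).hasFDerivAt.comp_hasDerivAt 0 (hline 0)
    simpa [Function.comp_def] using hg₀.deriv
  have hkernel : ∀ z : ℂ, (z - 0)⁻¹ • z⁻¹ • g (x + z • v) = (1 / (z - 0) ^ 2) • g (x + z • v) :=
    fun z => by rw [smul_smul]; congr 1; ring
  simp only [Real.circleAverage_eq_circleIntegral hR.ne', hkernel]
  rw [hdiff.deriv_eq_smul_circleIntegral hR, inv_smul_smul₀ Complex.two_pi_I_ne_zero, hderiv]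

theorem continuous_inv_circleMap_zero {R : ℝ} (hR : 0 < R) :
    Continuous fun θ => (circleMap 0 R θ)⁻¹ := by
  simpa using continuous_circleMap_inv (mem_ball_self (x := 0) hR)

theorem continuousOn_fderiv_of_continuousOn_prod [FiniteDimensional ℂ E] [CompleteSpace G]
    (hV : IsOpen V) {S : Set T} {F : E → T → G} (hF : ContinuousOn (Function.uncurry F) (V ×ˢ S))
    (hFx : ∀ t ∈ S, DifferentiableOn ℂ (F · t) V) :
    ContinuousOn (fun y : E × T => fderiv ℂ (F · y.2) y.1) (V ×ˢ S) := by
  refine continuousOn_clm_apply.2 fun v => ?_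
  rintro ⟨x₀, t₀⟩ ⟨hx₀, ht₀⟩
  obtain ⟨R, hR, W, hW, hWV⟩ := exists_radius_forall_add_smul_mem (hV.mem_nhds hx₀) v
  have hcirc : ∀ θ, circleMap 0 R θ ∈ closedBall (0 : ℂ) R := fun θ =>
    circleMap_mem_closedBall 0 hR.le θ
  have hcauchy : ∀ y ∈ W ×ˢ S, fderiv ℂ (F · y.2) y.1 v =
      Real.circleAverage (fun z => z⁻¹ • F (y.1 + z • v) y.2) 0 R := fun y hy =>
    fderiv_apply_eq_circleAverage hR fun z hz =>
      (hFx y.2 hy.2).differentiableAt (hV.mem_nhds (hWV y.1 hy.1 z hz))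
  have hcont : ContinuousOn (fun y : E × T => fderiv ℂ (F · y.2) y.1 v) (W ×ˢ S) := by
    refine ContinuousOn.congr ?_ hcauchy
    rw [continuousOn_iff_continuous_domRestrict]
    refine Continuous.const_smul
      (intervalIntegral.continuous_parametric_intervalIntegral_of_continuous' ?_ _ _) _
    refine ((continuous_inv_circleMap_zero hR).comp continuous_snd).smul ?_
    exact hF.comp_continuous
      (f := fun y : ↥(W ×ˢ S) × ℝ => (y.1.1.1 + circleMap 0 R y.2 • v, y.1.1.2))
      (by fun_prop) fun y => ⟨hWV _ y.1.2.1 _ (hcirc y.2), y.1.2.2⟩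
  refine (hcont _ ⟨mem_of_mem_nhds hW, ht₀⟩).mono_of_mem_nhdsWithin ?_
  rw [nhdsWithin_prod_eq]
  exact prod_mem_prod (mem_nhdsWithin_of_mem_nhds hW) self_mem_nhdsWithin

theorem differentiableOn_intervalIntegral [FiniteDimensional ℂ E] [CompleteSpace G]
    (hV : IsOpen V) {a b : ℝ} {F : E → ℝ → G}
    (hF : ContinuousOn (Function.uncurry F) (V ×ˢ uIcc a b))
    (hFx : ∀ t ∈ uIcc a b, DifferentiableOn ℂ (F · t) V) :
    DifferentiableOn ℂ (fun x => ∫ t in a..b, F x t) V := by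
  intro x₀ hx₀
  have : ProperSpace E := FiniteDimensional.proper ℂ E
  have hF' := continuousOn_fderiv_of_continuousOn_prod hV hF hFx
  obtain ⟨r, hr, hrV⟩ := nhds_basis_closedBall.mem_iff.1 (hV.mem_nhds hx₀)
  obtain ⟨C, hC⟩ := ((isCompact_closedBall x₀ r).prod
    (isCompact_uIcc (a := a) (b := b))).exists_bound_of_continuousOn
      (hF'.mono (prod_mono_left hrV))
  have hslice : ∀ x ∈ V, ContinuousOn (F x) (uIcc a b) := fun x hx =>
    hF.comp (f := fun t => (x, t)) (by fun_prop) fun t ht => ⟨hx, ht⟩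
  have hslice' : ContinuousOn (fun t => fderiv ℂ (F · t) x₀) (uIcc a b) :=
    hF'.comp (f := fun t => (x₀, t)) (by fun_prop) fun t ht => ⟨hx₀, ht⟩
  refine (intervalIntegral.hasFDerivAt_integral_of_dominated_of_fderiv_le
    (F' := fun x t => fderiv ℂ (F · t) x) (bound := fun _ => C)
    (closedBall_mem_nhds x₀ hr) ?_ (hslice x₀ hx₀).intervalIntegrable
    ((hslice'.mono uIoc_subset_uIcc).aestronglyMeasurable measurableSet_uIoc) ?_
    intervalIntegrable_const ?_).differentiableAt.differentiableWithinAt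
  · filter_upwards [hV.mem_nhds hx₀] with x hx
    exact ((hslice x hx).mono uIoc_subset_uIcc).aestronglyMeasurable measurableSet_uIoc
  · exact .of_forall fun t ht x hx => hC (x, t) ⟨hx, uIoc_subset_uIcc ht⟩
  · exact .of_forall fun t ht x hx =>
      ((hFx t (uIoc_subset_uIcc ht)).differentiableAt (hV.mem_nhds (hrV hx))).hasFDerivAt

theorem differentiableOn_fderiv_apply [FiniteDimensional ℂ E] [CompleteSpace G]
    (hV : IsOpen V) {g : E → G} (hg : DifferentiableOn ℂ g V) (v : E) :
    DifferentiableOn ℂ (fun x => fderiv ℂ g x v) V := by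
  intro x₀ hx₀
  obtain ⟨R, hR, W, hW, hWV⟩ := exists_radius_forall_add_smul_mem (hV.mem_nhds hx₀) v
  have hmem : ∀ x ∈ interior W, ∀ θ, x + circleMap 0 R θ • v ∈ V := fun x hx θ =>
    hWV x (interior_subset hx) _ (circleMap_mem_closedBall 0 hR.le θ)
  have hcauchy : ∀ x ∈ interior W, fderiv ℂ g x v =
      Real.circleAverage (fun z => z⁻¹ • g (x + z • v)) 0 R := fun x hx =>
    fderiv_apply_eq_circleAverage hR fun z hz =>
      hg.differentiableAt (hV.mem_nhds (hWV x (interior_subset hx) z hz))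
  have hcont : ContinuousOn (fun y : E × ℝ => (circleMap 0 R y.2)⁻¹ •
      g (y.1 + circleMap 0 R y.2 • v)) (interior W ×ˢ uIcc 0 (2 * Real.pi)) :=
    ((continuous_inv_circleMap_zero hR).comp continuous_snd).continuousOn.smul
      (hg.continuousOn.comp (by fun_prop) fun y hy => hmem y.1 hy.1 y.2)
  have hdiff : DifferentiableOn ℂ (fun x => fderiv ℂ g x v) (interior W) := by
    refine DifferentiableOn.congr ?_ hcauchy
    refine (differentiableOn_intervalIntegral (F := fun x θ => (circleMap 0 R θ)⁻¹ •
      g (x + circleMap 0 R θ • v)) isOpen_interior hcont fun θ _ => ?_).const_smul (2 * Real.pi)⁻¹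
    exact (hg.comp (by fun_prop) fun x hx => hmem x hx θ).const_smul _
  exact (hdiff.differentiableAt (interior_mem_nhds.2 hW)).differentiableWithinAt

end Analysis

section Bar

open Finset

theorem merge_castSucc_merge_of_le {A : Type*} [Semigroup A] {m : ℕ} (g : Fin (m + 2) → A)
    {a b : Fin m} (hab : a ≤ b) :
    merge (merge g a.castSucc) b = merge (merge g b.succ) a := by
  ext k
  rw [Fin.le_def] at hab
  simp only [merge, Fin.ext_iff, Fin.val_castSucc, Fin.val_succ]
  split_ifs <;> first | rfl | omega | exact mul_assoc _ _ _

theorem sum_univ_eq_sum_Iic_castSucc_add_sum_Ici_succ {M : Type*} [AddCommMonoid M] {m : ℕ}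
    (u : Fin (m + 1) → M) (j : Fin m) :
    ∑ i, u i = ∑ a ∈ Iic j, u a.castSucc + ∑ b ∈ Ici j, u b.succ := by
  have hdisj : Disjoint (Iic j.castSucc) (Ici j.succ) := by
    rw [disjoint_left]
    intro i
    simp only [mem_Iic, mem_Ici, Fin.le_def, Fin.val_castSucc, Fin.val_succ]
    omega
  have hunion : (univ : Finset (Fin (m + 1))) = Iic j.castSucc ∪ Ici j.succ := by
    ext i
    simp only [mem_univ, mem_union, mem_Iic, mem_Ici, Fin.le_def, Fin.val_castSucc, Fin.val_succ,
      true_iff]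
    omega
  rw [hunion, sum_union hdisj, ← Fin.map_castSuccEmb_Iic, ← Fin.map_succEmb_Ici, sum_map, sum_map]
  rfl

theorem alternatingSum_merge_merge {A R : Type*} [Semigroup A] [Ring R] {m : ℕ}
    (g : Fin (m + 2) → A) (F : (Fin m → A) → R) :
    ∑ i : Fin (m + 1), (-1 : R) ^ (i : ℕ) *
      ∑ j : Fin m, (-1 : R) ^ (j : ℕ) * F (merge (merge g i) j) = 0 := by
  have hcancel : ∀ a b : Fin m, a ≤ b →
      (-1 : R) ^ (a.castSucc : ℕ) * ((-1) ^ (b : ℕ) * F (merge (merge g a.castSucc) b)) +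
        (-1) ^ (b.succ : ℕ) * ((-1) ^ (a : ℕ) * F (merge (merge g b.succ) a)) = 0 := by
    intro a b hab
    rw [merge_castSucc_merge_of_le g hab, ← mul_assoc, ← mul_assoc, ← pow_add, ← pow_add,
      Fin.val_castSucc, Fin.val_succ, show (b : ℕ) + 1 + a = a + b + 1 by omega, pow_succ]
    simp
  simp only [mul_sum]
  rw [sum_comm]
  simp only [fun j : Fin m => sum_univ_eq_sum_Iic_castSucc_add_sum_Ici_succ
    (fun i => (-1 : R) ^ (i : ℕ) * ((-1) ^ (j : ℕ) * F (merge (merge g i) j))) j]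
  rw [sum_add_distrib, sum_comm' (s := univ) (t := Ici) (t' := univ) (s' := Iic) (by simp),
    ← sum_add_distrib]
  refine sum_eq_zero fun b _ => ?_
  rw [← sum_add_distrib]
  exact sum_eq_zero fun a ha => hcancel a b (mem_Iic.1 ha)

variable {n m : ℕ}

theorem merge_apply_zero (f : Fin (m + 3) → ((Fin n → ℂ) → ℂ)) (i : Fin (m + 2)) :
    merge f i 0 = f 0 * merge (bord f) i 0 := by
  simp only [merge, bord, Fin.ext_iff, Fin.val_castSucc, Fin.val_succ, Fin.val_zero, Fin.val_last]
  split_ifs <;> first | contradiction | omega | simp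

theorem merge_apply_last (f : Fin (m + 3) → ((Fin n → ℂ) → ℂ)) (i : Fin (m + 2)) :
    merge f i (Fin.last (m + 1)) =
      f (Fin.last (m + 2)) * merge (bord f) i (Fin.last (m + 1)) := by
  have hi := i.2
  simp only [merge, bord, Fin.ext_iff, Fin.val_castSucc, Fin.val_succ, Fin.val_zero, Fin.val_last]
  split_ifs <;> first | contradiction | omega | (simp; done) |
    (rw [mul_one]; exact mul_comm _ _)

theorem bord_merge_bord (f : Fin (m + 3) → ((Fin n → ℂ) → ℂ)) (i : Fin (m + 2)) :
    bord (merge (bord f) i) = bord (merge f i) := by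
  funext k
  have hi := i.2
  have hk := k.2
  simp only [merge, bord, Fin.ext_iff, Fin.val_castSucc, Fin.val_succ, Fin.val_zero, Fin.val_last]
  split_ifs <;> first | contradiction | omega | rfl

theorem differentiableOn_merge {U : Set (Fin n → ℂ)} {g : Fin (m + 1) → ((Fin n → ℂ) → ℂ)}
    (hg : ∀ k, DifferentiableOn ℂ (g k) U) (i k : Fin m) :
    DifferentiableOn ℂ (merge g i k) U := by
  unfold merge
  split_ifs
  exacts [hg _, (hg _).mul (hg _), hg _]

theorem differentiableOn_bord {U : Set (Fin n → ℂ)} {f : Fin (m + 2) → ((Fin n → ℂ) → ℂ)}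
    (hf : ∀ k, DifferentiableOn ℂ (f k) U) (k : Fin (m + 2)) :
    DifferentiableOn ℂ (bord f k) U := by
  unfold bord
  split_ifs
  exacts [differentiableOn_const 1, differentiableOn_const 1, hf k]

end Bar

section Sign

variable {n : ℕ}

theorem sgn_mul_self (j : Fin n) (I : Finset (Fin n)) : sgn n j I * sgn n j I = 1 := by
  simp [sgn, ← mul_pow]

theorem sgn_insert {i : Fin n} {I : Finset (Fin n)} (hi : i ∉ I) (j : Fin n) :
    sgn n j (insert i I) = if i < j then -sgn n j I else sgn n j I := by
  simp only [sgn, Finset.filter_insert]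
  split_ifs
  · rw [Finset.card_insert_of_notMem (by simp [hi]), pow_succ, mul_neg_one]
  · rfl

theorem sgn_insert_mul_sgn_insert {j k : Fin n} {I : Finset (Fin n)} (hj : j ∉ I) (hk : k ∉ I)
    (hjk : j ≠ k) :
    sgn n j (insert k I) * sgn n k (insert j I) = -(sgn n k I * sgn n j I) := by
  rw [sgn_insert hj, sgn_insert hk]
  rcases hjk.lt_or_gt with h | h <;> simp [h, h.not_gt, mul_comm]

end Sign

section SegmentIntegral

open Set MeasureTheory

variable {n : ℕ} {U : Set (Fin n → ℂ)} {p : Pt n}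

/-- The segment from the diagonal point `(ζ, ζ)` to `p = (z, ζ)`, along which the homotopy
operator `P` integrates. -/
noncomputable def segPt (p : Pt n) (t : ℝ) : Pt n := (p.2 + t • (p.1 - p.2), p.2)

/-- The weighted integral `∫₀¹ t^m g(ζ + t(z - ζ), ζ) dt`. -/
noncomputable def segIntegral (m : ℕ) (g : Pt n → ℂ) (p : Pt n) : ℂ :=
  ∫ t in (0 : ℝ)..1, (t : ℂ) ^ m * g (segPt p t)

theorem segPt_mem (hU : Convex ℝ U) (hp : p ∈ U ×ˢ U) {t : ℝ} (ht : t ∈ uIcc (0 : ℝ) 1) :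
    segPt p t ∈ U ×ˢ U :=
  ⟨hU.add_smul_sub_mem hp.2 hp.1 (uIcc_of_le (zero_le_one' ℝ) ▸ ht), hp.2⟩

theorem continuous_uncurry_segPt : Continuous (Function.uncurry (segPt (n := n))) := by
  unfold segPt Function.uncurry
  fun_prop

theorem segPt_fst_sub_snd (p : Pt n) (t : ℝ) (j : Fin n) :
    (segPt p t).1 j - (segPt p t).2 j = t * (p.1 j - p.2 j) := by
  simp [segPt]

theorem intervalIntegrable_segIntegrand (hU : Convex ℝ U) (hp : p ∈ U ×ˢ U) {g : Pt n → ℂ}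
    (hg : ContinuousOn g (U ×ˢ U)) (m : ℕ) :
    IntervalIntegrable (fun t : ℝ => (t : ℂ) ^ m * g (segPt p t)) volume 0 1 := by
  have hseg : Continuous (segPt p) := continuous_uncurry_segPt.comp (Continuous.prodMk_right p)
  have hgseg := hg.comp hseg.continuousOn fun t ht => segPt_mem hU hp ht
  exact (ContinuousOn.mul (by fun_prop) hgseg).intervalIntegrable

theorem segIntegral_congr (hU : Convex ℝ U) (hp : p ∈ U ×ˢ U) {g h : Pt n → ℂ}
    (hgh : EqOn g h (U ×ˢ U)) (m : ℕ) : segIntegral m g p = segIntegral m h p :=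
  intervalIntegral.integral_congr fun _ ht => congrArg _ (hgh (segPt_mem hU hp ht))

theorem segIntegral_add (hU : Convex ℝ U) (hp : p ∈ U ×ˢ U) {g h : Pt n → ℂ}
    (hg : ContinuousOn g (U ×ˢ U)) (hh : ContinuousOn h (U ×ˢ U)) (m : ℕ) :
    segIntegral m (fun y => g y + h y) p = segIntegral m g p + segIntegral m h p := by
  simp only [segIntegral, mul_add]
  exact intervalIntegral.integral_add (intervalIntegrable_segIntegrand hU hp hg m)
    (intervalIntegrable_segIntegrand hU hp hh m)

theorem segIntegral_sum (hU : Convex ℝ U) (hp : p ∈ U ×ˢ U) {ι : Type*} {s : Finset ι}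
    {g : ι → Pt n → ℂ} (hg : ∀ i ∈ s, ContinuousOn (g i) (U ×ˢ U)) (m : ℕ) :
    segIntegral m (fun y => ∑ i ∈ s, g i y) p = ∑ i ∈ s, segIntegral m (g i) p := by
  simp only [segIntegral, Finset.mul_sum]
  exact intervalIntegral.integral_finsetSum fun i hi =>
    intervalIntegrable_segIntegrand hU hp (hg i hi) m

theorem segIntegral_const_mul (m : ℕ) (c : ℂ) (g : Pt n → ℂ) (p : Pt n) :
    segIntegral m (fun y => c * g y) p = c * segIntegral m g p := by
  simp only [segIntegral, mul_left_comm _ c, intervalIntegral.integral_const_mul]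

theorem segIntegral_zero (m : ℕ) (p : Pt n) : segIntegral m 0 p = 0 := by
  simp [segIntegral]

theorem segIntegral_coord_sub_mul (m : ℕ) (j : Fin n) (g : Pt n → ℂ) (p : Pt n) :
    segIntegral m (fun y => (y.1 j - y.2 j) * g y) p =
      (p.1 j - p.2 j) * segIntegral (m + 1) g p := by
  simp only [segIntegral, segPt_fst_sub_snd, ← intervalIntegral.integral_const_mul]
  congr! 2
  ring

theorem differentiableOn_segIntegral (hUo : IsOpen U) (hU : Convex ℝ U) {g : Pt n → ℂ}
    (hg : DifferentiableOn ℂ g (U ×ˢ U)) (m : ℕ) :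
    DifferentiableOn ℂ (segIntegral m g) (U ×ˢ U) := by
  have hmaps : ∀ y ∈ (U ×ˢ U) ×ˢ uIcc (0 : ℝ) 1, Function.uncurry segPt y ∈ U ×ˢ U :=
    fun y hy => segPt_mem hU hy.1 hy.2
  refine differentiableOn_intervalIntegral (F := fun p t => (t : ℂ) ^ m * g (segPt p t))
    (hUo.prod hUo) ?_ fun t ht => ?_
  · exact ContinuousOn.mul (by fun_prop)
      (hg.continuousOn.comp continuous_uncurry_segPt.continuousOn hmaps)
  · have hseg : Differentiable ℂ fun p : Pt n => segPt p t := by unfold segPt; fun_prop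
    exact (hg.comp hseg.differentiableOn fun p hp => segPt_mem hU hp ht).const_mul _

end SegmentIntegral

section PartialDerivative

variable {n : ℕ} {U : Set (Fin n → ℂ)}

theorem differentiableOn_pd (hUo : IsOpen U) {g : Pt n → ℂ} (hg : DifferentiableOn ℂ g (U ×ˢ U))
    (j : Fin n) : DifferentiableOn ℂ (pd n j g) (U ×ˢ U) :=
  differentiableOn_fderiv_apply (hUo.prod hUo) hg _

theorem pd_zero (j : Fin n) : pd n j 0 = 0 := by
  ext p
  simp [pd]

theorem pd_sum {ι : Type*} {s : Finset ι} {g : ι → Pt n → ℂ} {y : Pt n}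
    (hg : ∀ i ∈ s, DifferentiableAt ℂ (g i) y) (j : Fin n) :
    pd n j (fun p => ∑ i ∈ s, g i p) y = ∑ i ∈ s, pd n j (g i) y := by
  simp [pd, fderiv_fun_sum hg]

theorem pd_const_mul {g : Pt n → ℂ} {y : Pt n} (hg : DifferentiableAt ℂ g y) (c : ℂ)
    (j : Fin n) : pd n j (fun p => c * g p) y = c * pd n j g y := by
  simp [pd, fderiv_const_mul hg]

theorem pd_coord_sub_mul {g : Pt n → ℂ} {y : Pt n} (hg : DifferentiableAt ℂ g y)
    (j k : Fin n) :
    pd n k (fun p => (p.1 j - p.2 j) * g p) y =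
      (if j = k then g y else 0) + (y.1 j - y.2 j) * pd n k g y := by
  let coordSub : Pt n →L[ℂ] ℂ := (ContinuousLinearMap.proj j).comp
    (ContinuousLinearMap.fst ℂ (Fin n → ℂ) (Fin n → ℂ) - ContinuousLinearMap.snd ℂ _ _)
  have hcoord : HasFDerivAt (fun p : Pt n => p.1 j - p.2 j) coordSub y := coordSub.hasFDerivAt
  simp only [pd]
  rw [(hcoord.fun_mul hg.hasFDerivAt).fderiv]
  simp [coordSub, Pi.single_apply, add_comm]

theorem fderiv_apply_eq_sum_pd (g : Pt n → ℂ) (y : Pt n) (v : Fin n → ℂ) :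
    fderiv ℂ g y (v, 0) = ∑ j, v j * pd n j g y := by
  have hv : ((v, 0) : Pt n) = ∑ j, v j • ((Pi.single j 1, 0) : Pt n) := by
    ext i
    · simp [Prod.fst_sum, Finset.sum_apply, Pi.single_apply]
    · simp [Prod.snd_sum]
  simp only [hv, map_sum, map_smul, smul_eq_mul, pd]

theorem hasDerivAt_pow_mul_comp_segPt {g : Pt n → ℂ} {p : Pt n} {t : ℝ}
    (hg : DifferentiableAt ℂ g (segPt p t)) (m : ℕ) :
    HasDerivAt (fun t : ℝ => (t : ℂ) ^ m * g (segPt p t))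
      (m * ((t : ℂ) ^ (m - 1) * g (segPt p t)) +
        (t : ℂ) ^ m * ∑ j, (p.1 j - p.2 j) * pd n j g (segPt p t)) t := by
  have hpow : HasDerivAt (fun t : ℝ => (t : ℂ) ^ m) (m * (t : ℂ) ^ (m - 1)) t := by
    simpa using (hasDerivAt_pow m (t : ℂ)).comp_ofReal
  have hseg : HasDerivAt (segPt p) (p.1 - p.2, 0) t := by
    refine HasDerivAt.prodMk ?_ (hasDerivAt_const _ _)
    simpa using ((hasDerivAt_id t).smul_const (p.1 - p.2)).const_add p.2
  have hgseg := (hg.hasFDerivAt.restrictScalars ℝ).comp_hasDerivAt t hseg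
  rw [ContinuousLinearMap.coe_restrictScalars', fderiv_apply_eq_sum_pd] at hgseg
  exact (hpow.mul hgseg).congr_deriv (by simp [mul_assoc])

theorem natCast_mul_segIntegral_add_sum_segIntegral_pd (hUo : IsOpen U) (hU : Convex ℝ U)
    {p : Pt n} (hp : p ∈ U ×ˢ U) {g : Pt n → ℂ} (hg : DifferentiableOn ℂ g (U ×ˢ U)) (m : ℕ) :
    m * segIntegral (m - 1) g p + ∑ j, (p.1 j - p.2 j) * segIntegral m (pd n j g) p =
      g p - 0 ^ m * g (p.2, p.2) := by
  have hdiff : ∀ t ∈ Set.uIcc (0 : ℝ) 1, DifferentiableAt ℂ g (segPt p t) := fun t ht =>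
    hg.differentiableAt ((hUo.prod hUo).mem_nhds (segPt_mem hU hp ht))
  have hpd : ∀ j, ContinuousOn (fun y => (p.1 j - p.2 j) * pd n j g y) (U ×ˢ U) := fun j =>
    ((differentiableOn_pd hUo hg j).const_mul _).continuousOn
  have hint₁ := (intervalIntegrable_segIntegrand hU hp hg.continuousOn (m - 1)).const_mul (m : ℂ)
  have hint₂ := intervalIntegrable_segIntegrand hU hp
    (continuousOn_finsetSum Finset.univ fun j _ => hpd j) m
  calc m * segIntegral (m - 1) g p + ∑ j, (p.1 j - p.2 j) * segIntegral m (pd n j g) p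
      = m * segIntegral (m - 1) g p +
          segIntegral m (fun y => ∑ j, (p.1 j - p.2 j) * pd n j g y) p := by
        rw [segIntegral_sum hU hp fun j _ => hpd j]
        simp only [segIntegral_const_mul]
    _ = ∫ t in (0 : ℝ)..1, (m * ((t : ℂ) ^ (m - 1) * g (segPt p t)) +
          (t : ℂ) ^ m * ∑ j, (p.1 j - p.2 j) * pd n j g (segPt p t)) := by
        rw [intervalIntegral.integral_add hint₁ hint₂, intervalIntegral.integral_const_mul]
        rfl
    _ = g p - 0 ^ m * g (p.2, p.2) := by
        rw [intervalIntegral.integral_eq_sub_of_hasDerivAt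
          (fun t ht => hasDerivAt_pow_mul_comp_segPt (hdiff t ht) m) (hint₁.add hint₂)]
        simp [segPt]

end PartialDerivative

section Homotopy

variable {n : ℕ} {U : Set (Fin n → ℂ)} {ω : Coeff n} {p : Pt n}

theorem P_apply (ω : Coeff n) (J : Finset (Fin n)) (p : Pt n) :
    P n ω J p = ∑ j ∈ J, sgn n j (J.erase j) *
      segIntegral (J.card - 1) (pd n j (ω (J.erase j))) p :=
  rfl

theorem differentiableOn_P (hUo : IsOpen U) (hU : Convex ℝ U)
    (hω : ∀ I, DifferentiableOn ℂ (ω I) (U ×ˢ U)) (J : Finset (Fin n)) :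
    DifferentiableOn ℂ (P n ω J) (U ×ˢ U) :=
  DifferentiableOn.fun_sum fun j _ =>
    (differentiableOn_segIntegral hUo hU (differentiableOn_pd hUo (hω _) j) _).const_mul _

theorem P_eq_zero_of_eqOn_zero (hUo : IsOpen U) (hU : Convex ℝ U)
    (hω : ∀ I, Set.EqOn (ω I) 0 (U ×ˢ U)) (J : Finset (Fin n)) (hp : p ∈ U ×ˢ U) :
    P n ω J p = 0 := by
  have hpd : ∀ j I, Set.EqOn (pd n j (ω I)) 0 (U ×ˢ U) := by
    intro j I y hy
    have hnhds : ω I =ᶠ[nhds y] 0 := (hω I).eventuallyEq_of_mem ((hUo.prod hUo).mem_nhds hy)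
    simp [pd, hnhds.fderiv_eq]
  rw [P_apply]
  refine Finset.sum_eq_zero fun j _ => ?_
  rw [segIntegral_congr hU hp (hpd j _), segIntegral_zero, mul_zero]

theorem MemK.P (hUo : IsOpen U) (hU : Convex ℝ U) {q : ℕ} (hω : MemK n U q ω) :
    MemK n U (q + 1) (P n ω) := by
  refine ⟨fun J hJ => ?_, differentiableOn_P hUo hU hω.2⟩
  ext p
  rw [P_apply]
  refine Finset.sum_eq_zero fun j hj => ?_
  have hcard : (J.erase j).card ≠ q := fun h => hJ (by rw [← Finset.card_erase_add_one hj, h])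
  rw [hω.1 _ hcard, pd_zero, segIntegral_zero, mul_zero]

theorem pd_dK (hUo : IsOpen U) (hω : ∀ I, DifferentiableOn ℂ (ω I) (U ×ˢ U)) {k : Fin n}
    {I : Finset (Fin n)} (hk : k ∉ I) {y : Pt n} (hy : y ∈ U ×ˢ U) :
    pd n k (dK n ω I) y = sgn n k I * ω (insert k I) y +
      ∑ j ∈ Iᶜ, sgn n j I * ((y.1 j - y.2 j) * pd n k (ω (insert j I)) y) := by
  have hdiff : ∀ L, DifferentiableAt ℂ (ω L) y := fun L =>
    (hω L).differentiableAt ((hUo.prod hUo).mem_nhds hy)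
  have hterm : ∀ j L, DifferentiableAt ℂ (fun p : Pt n => (p.1 j - p.2 j) * ω L p) y :=
    fun j L => DifferentiableAt.mul (by fun_prop) (hdiff L)
  have hprod : ∀ j, pd n k (fun p => sgn n j I * ((p.1 j - p.2 j) * ω (insert j I) p)) y =
      (if j = k then sgn n j I * ω (insert j I) y else 0) +
        sgn n j I * ((y.1 j - y.2 j) * pd n k (ω (insert j I)) y) := fun j => by
    rw [pd_const_mul (hterm j _), pd_coord_sub_mul (hdiff _), mul_add, mul_ite, mul_zero]
  unfold dK
  rw [pd_sum fun j _ => (hterm j _).const_mul _]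
  simp only [hprod, Finset.sum_add_distrib]
  simp [hk]

theorem segIntegral_pd_dK (hUo : IsOpen U) (hU : Convex ℝ U)
    (hω : ∀ I, DifferentiableOn ℂ (ω I) (U ×ˢ U)) {k : Fin n} {I : Finset (Fin n)} (hk : k ∉ I)
    (hp : p ∈ U ×ˢ U) (m : ℕ) :
    segIntegral m (pd n k (dK n ω I)) p = sgn n k I * segIntegral m (ω (insert k I)) p +
      ∑ j ∈ Iᶜ, sgn n j I *
        ((p.1 j - p.2 j) * segIntegral (m + 1) (pd n k (ω (insert j I))) p) := by
  have hterm : ∀ j ∈ Iᶜ, ContinuousOn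
      (fun y : Pt n => sgn n j I * ((y.1 j - y.2 j) * pd n k (ω (insert j I)) y)) (U ×ˢ U) :=
    fun j _ => continuousOn_const.mul
      (ContinuousOn.mul (by fun_prop) (differentiableOn_pd hUo (hω _) k).continuousOn)
  rw [segIntegral_congr hU hp (fun y hy => pd_dK hUo hω hk hy),
    segIntegral_add hU hp ((hω _).const_mul _).continuousOn (continuousOn_finsetSum _ hterm),
    segIntegral_sum hU hp hterm]
  simp only [segIntegral_const_mul, segIntegral_coord_sub_mul]

/-- The terms of `P (d_K ω)` at `e^J` in which the index contracted by `d_K` and the index wedged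
in by `P` are distinct; they occur in `d_K (P ω)` with the opposite sign. -/
noncomputable def mixedTerms (ω : Coeff n) (J : Finset (Fin n)) (p : Pt n) : ℂ :=
  ∑ k ∈ J, ∑ j ∈ Jᶜ, sgn n k (J.erase k) * sgn n j (J.erase k) *
    ((p.1 j - p.2 j) * segIntegral J.card (pd n k (ω (insert j (J.erase k)))) p)

theorem dK_P_apply (ω : Coeff n) (J : Finset (Fin n)) (p : Pt n) :
    dK n (P n ω) J p =
      ∑ j ∈ Jᶜ, (p.1 j - p.2 j) * segIntegral J.card (pd n j (ω J)) p - mixedTerms ω J p := by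
  rw [mixedTerms, Finset.sum_comm, ← Finset.sum_sub_distrib]
  refine Finset.sum_congr rfl fun j hj => ?_
  have hjJ : j ∉ J := Finset.mem_compl.1 hj
  have hne : ∀ k ∈ J, j ≠ k := fun k hk h => hjJ (h ▸ hk)
  have hmixed : ∀ k ∈ J, sgn n j J * sgn n k ((insert j J).erase k) =
      -(sgn n k (J.erase k) * sgn n j (J.erase k)) := by
    intro k hk
    have hsign := sgn_insert_mul_sgn_insert (fun h => hjJ (Finset.mem_of_mem_erase h))
      (Finset.notMem_erase k J) (hne k hk)
    rwa [Finset.insert_erase hk, ← Finset.erase_insert_of_ne (hne k hk)] at hsign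
  rw [P_apply, Finset.sum_insert hjJ, Finset.erase_insert hjJ, Finset.card_insert_of_notMem hjJ,
    Nat.add_sub_cancel, mul_add, mul_add, Finset.mul_sum, Finset.mul_sum]
  refine (congrArg₂ (· + ·) ?_ ?_).trans (sub_eq_add_neg _ _).symm
  · linear_combination
      (p.1 j - p.2 j) * segIntegral J.card (pd n j (ω J)) p * sgn_mul_self j J
  · rw [← Finset.sum_neg_distrib]
    refine Finset.sum_congr rfl fun k hk => ?_
    rw [← Finset.erase_insert_of_ne (hne k hk)]
    linear_combination
      (p.1 j - p.2 j) * segIntegral J.card (pd n k (ω ((insert j J).erase k))) p * hmixed k hk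

theorem P_dK_apply (hUo : IsOpen U) (hU : Convex ℝ U)
    (hω : ∀ I, DifferentiableOn ℂ (ω I) (U ×ˢ U)) (J : Finset (Fin n)) (hp : p ∈ U ×ˢ U) :
    P n (dK n ω) J p = J.card * segIntegral (J.card - 1) (ω J) p +
      ∑ k ∈ J, (p.1 k - p.2 k) * segIntegral J.card (pd n k (ω J)) p + mixedTerms ω J p := by
  rw [P_apply, mixedTerms, ← nsmul_eq_mul, ← Finset.sum_const, ← Finset.sum_add_distrib,
    ← Finset.sum_add_distrib]
  refine Finset.sum_congr rfl fun k hk => ?_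
  have hcard : J.card - 1 + 1 = J.card := Nat.sub_add_cancel (Finset.card_pos.2 ⟨k, hk⟩)
  have hkJ : k ∉ Jᶜ := fun h => Finset.mem_compl.1 h hk
  rw [segIntegral_pd_dK hUo hU hω (Finset.notMem_erase k J) hp, hcard, Finset.compl_erase,
    Finset.sum_insert hkJ, Finset.insert_erase hk, mul_add, mul_add, Finset.mul_sum]
  simp only [← mul_assoc, sgn_mul_self, one_mul, add_assoc]

theorem res_apply (ω : Coeff n) (J : Finset (Fin n)) (p : Pt n) :
    res n ω J p = 0 ^ J.card * ω J (p.2, p.2) := by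
  by_cases hJ : J = ∅ <;> simp [res, hJ]

theorem dK_P_add_P_dK (hUo : IsOpen U) (hU : Convex ℝ U)
    (hω : ∀ I, DifferentiableOn ℂ (ω I) (U ×ˢ U)) (J : Finset (Fin n)) (hp : p ∈ U ×ˢ U) :
    dK n (P n ω) J p + P n (dK n ω) J p = ω J p - res n ω J p := by
  rw [dK_P_apply, P_dK_apply hUo hU hω J hp, res_apply,
    ← natCast_mul_segIntegral_add_sum_segIntegral_pd hUo hU hp (hω J) J.card,
    ← Finset.sum_add_sum_compl J]
  ring

theorem dK_P_of_dK_eq_zero_of_res_eq_zero (hUo : IsOpen U) (hU : Convex ℝ U)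
    (hω : ∀ I, DifferentiableOn ℂ (ω I) (U ×ˢ U)) (hd : ∀ I, Set.EqOn (dK n ω I) 0 (U ×ˢ U))
    {J : Finset (Fin n)} (hp : p ∈ U ×ˢ U) (hres : res n ω J p = 0) :
    dK n (P n ω) J p = ω J p := by
  simpa [P_eq_zero_of_eqOn_zero hUo hU hd J hp, hres] using dK_P_add_P_dK hUo hU hω J hp

end Homotopy

section ChainMap

variable {n q : ℕ} {U : Set (Fin n → ℂ)} {ω : Coeff n}

/-- The image `Φ^{-q}(∂g)` of the bar boundary of the pure tensor `g = g₀ ⊗ … ⊗ g_{q+2}`. -/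
noncomputable def PhiBoundary (n q : ℕ) (g : Fin (q + 3) → ((Fin n → ℂ) → ℂ)) : Coeff n :=
  fun J p => ∑ i : Fin (q + 2), (-1 : ℂ) ^ (i : ℕ) * Phi n q (merge g i) J p

theorem Phi_succ_apply (f : Fin (q + 3) → ((Fin n → ℂ) → ℂ)) (J : Finset (Fin n)) (p : Pt n) :
    Phi n (q + 1) f J p =
      f 0 p.1 * f (Fin.last (q + 2)) p.2 * P n (PhiBoundary n q (bord f)) J p :=
  rfl

theorem MemK.PhiBoundary {g : Fin (q + 3) → ((Fin n → ℂ) → ℂ)}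
    (hg : ∀ i, MemK n U q (Phi n q (merge g i))) : MemK n U q (PhiBoundary n q g) := by
  refine ⟨fun I hI => ?_, fun I =>
    DifferentiableOn.fun_sum fun i _ => ((hg i).2 I).const_mul _⟩
  ext p
  simp [TwistedKoszul.PhiBoundary, (hg _).1 I hI]

theorem memK_ofFun {g : Pt n → ℂ} (hg : DifferentiableOn ℂ g (U ×ˢ U)) :
    MemK n U 0 (ofFun n g) := by
  have hne : ∀ I ≠ ∅, ofFun n g I = 0 := fun I hI => by
    ext p
    simp [ofFun, hI]
  refine ⟨fun I hI => hne I fun h => hI (by simp [h]), fun I => ?_⟩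
  by_cases hI : I = ∅
  · exact hg.congr fun p _ => by simp [ofFun, hI]
  · exact hne I hI ▸ differentiableOn_const 0

theorem MemK.mul_left {g : Pt n → ℂ} (hω : MemK n U q ω) (hg : DifferentiableOn ℂ g (U ×ˢ U)) :
    MemK n U q (fun J p => g p * ω J p) := by
  refine ⟨fun I hI => ?_, fun I => hg.mul (hω.2 I)⟩
  ext p
  simp [hω.1 I hI]

theorem memK_Phi (hUo : IsOpen U) (hU : Convex ℝ U) {f : Fin (q + 2) → ((Fin n → ℂ) → ℂ)}
    (hf : ∀ k, DifferentiableOn ℂ (f k) U) : MemK n U q (Phi n q f) := by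
  have hend : ∀ {g h : (Fin n → ℂ) → ℂ}, DifferentiableOn ℂ g U → DifferentiableOn ℂ h U →
      DifferentiableOn ℂ (fun p : Pt n => g p.1 * h p.2) (U ×ˢ U) := fun hg hh =>
    (hg.comp differentiableOn_fst fun _ hp => hp.1).mul
      (hh.comp differentiableOn_snd fun _ hp => hp.2)
  induction q with
  | zero => exact memK_ofFun (hend (hf 0) (hf 1))
  | succ q ih =>
    exact ((MemK.PhiBoundary fun i => ih (differentiableOn_merge (differentiableOn_bord hf) i)).P
      hUo hU).mul_left (hend (hf 0) (hf _))

theorem memK_PhiBoundary (hUo : IsOpen U) (hU : Convex ℝ U)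
    {g : Fin (q + 3) → ((Fin n → ℂ) → ℂ)} (hg : ∀ k, DifferentiableOn ℂ (g k) U) :
    MemK n U q (PhiBoundary n q g) :=
  .PhiBoundary fun i => memK_Phi hUo hU (differentiableOn_merge hg i)

theorem Phi_merge_apply (f : Fin (q + 3) → ((Fin n → ℂ) → ℂ)) (i : Fin (q + 2))
    (J : Finset (Fin n)) (p : Pt n) :
    Phi n q (merge f i) J p =
      f 0 p.1 * f (Fin.last (q + 2)) p.2 * Phi n q (merge (bord f) i) J p := by
  have hzero : merge f i 0 p.1 = f 0 p.1 * merge (bord f) i 0 p.1 :=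
    congrFun (merge_apply_zero f i) p.1
  have hlast : merge f i (Fin.last (q + 1)) p.2 =
      f (Fin.last (q + 2)) p.2 * merge (bord f) i (Fin.last (q + 1)) p.2 :=
    congrFun (merge_apply_last f i) p.2
  cases q with
  | zero =>
    by_cases hJ : J = ∅
    · simp only [Phi, ofFun, hJ, if_true, show (1 : Fin 2) = Fin.last 1 from rfl]
      rw [hzero, hlast]
      ring
    · simp [Phi, ofFun, hJ]
  | succ q =>
    rw [Phi_succ_apply, Phi_succ_apply, hzero, hlast, bord_merge_bord]
    ring

theorem PhiBoundary_apply_eq_mul_bord (f : Fin (q + 3) → ((Fin n → ℂ) → ℂ))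
    (J : Finset (Fin n)) (p : Pt n) :
    PhiBoundary n q f J p =
      f 0 p.1 * f (Fin.last (q + 2)) p.2 * PhiBoundary n q (bord f) J p := by
  simp only [PhiBoundary, Phi_merge_apply f, Finset.mul_sum, mul_left_comm]

theorem dK_mul_left (c : Pt n → ℂ) (ω : Coeff n) (J : Finset (Fin n)) (p : Pt n) :
    dK n (fun I y => c y * ω I y) J p = c p * dK n ω J p := by
  simp only [dK, Finset.mul_sum, mul_left_comm (c p)]

theorem dK_PhiBoundary (g : Fin (q + 3) → ((Fin n → ℂ) → ℂ)) (J : Finset (Fin n)) (p : Pt n) :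
    dK n (PhiBoundary n q g) J p =
      ∑ i : Fin (q + 2), (-1 : ℂ) ^ (i : ℕ) * dK n (Phi n q (merge g i)) J p := by
  simp only [dK, PhiBoundary, Finset.mul_sum]
  rw [Finset.sum_comm]
  exact Finset.sum_congr rfl fun i _ => Finset.sum_congr rfl fun j _ => by ring

theorem dK_Phi_succ_of_dK_eq_zero_of_res_eq_zero (hUo : IsOpen U) (hU : Convex ℝ U)
    {f : Fin (q + 3) → ((Fin n → ℂ) → ℂ)} (hf : ∀ k, DifferentiableOn ℂ (f k) U)
    (hd : ∀ I, Set.EqOn (dK n (PhiBoundary n q (bord f)) I) 0 (U ×ˢ U))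
    {J : Finset (Fin n)} {p : Pt n} (hp : p ∈ U ×ˢ U)
    (hres : res n (PhiBoundary n q (bord f)) J p = 0) :
    dK n (Phi n (q + 1) f) J p = PhiBoundary n q f J p := by
  have hmem := memK_PhiBoundary hUo hU (differentiableOn_bord hf)
  calc dK n (Phi n (q + 1) f) J p
      = f 0 p.1 * f (Fin.last (q + 2)) p.2 * dK n (P n (PhiBoundary n q (bord f))) J p :=
        dK_mul_left (fun y => f 0 y.1 * f (Fin.last (q + 2)) y.2) _ J p
    _ = f 0 p.1 * f (Fin.last (q + 2)) p.2 * PhiBoundary n q (bord f) J p := by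
        rw [dK_P_of_dK_eq_zero_of_res_eq_zero hUo hU hmem.2 hd hp hres]
    _ = PhiBoundary n q f J p := (PhiBoundary_apply_eq_mul_bord f J p).symm

theorem MemK.dK_eq_zero (hω : MemK n U 0 ω) : dK n ω = 0 := by
  ext J p
  simp [dK, hω.1 _ (Finset.insert_nonempty _ J).card_ne_zero]

theorem MemK.res_eq_zero (hω : MemK n U (q + 1) ω) : res n ω = 0 := by
  ext J p
  simp [res, hω.1 ∅ (by simp)]

theorem res_PhiBoundary_zero_bord (f : Fin 3 → ((Fin n → ℂ) → ℂ)) :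
    res n (PhiBoundary n 0 (bord f)) = 0 := by
  ext J p
  simp [res, PhiBoundary, Phi, ofFun, merge, bord, Fin.ext_iff]

end ChainMap

/-- The maps `Φ^{-q}` form a chain map from the bar complex of
`A = O(U)` to the Koszul complex: for every `q ≥ 1` (written `q + 1` below) and
all `f₀, …, f_{q+1} ∈ A`,
`d_K(Φ^{-q}(f₀ ⊗ … ⊗ f_{q+1})) = Φ^{-(q-1)}(∂(f₀ ⊗ … ⊗ f_{q+1}))`, where
`∂(f₀ ⊗ … ⊗ f_{q+1}) = Σ_{i=0}^q (-1)^i f₀ ⊗ … ⊗ f_i f_{i+1} ⊗ … ⊗ f_{q+1}`. -/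
theorem statement7 (n : ℕ) (hn : 1 ≤ n)
    (U : Set (Fin n → ℂ)) (hUopen : IsOpen U) (hUconv : Convex ℝ U)
    (hUne : U.Nonempty)
    (q : ℕ) (f : Fin (q + 3) → ((Fin n → ℂ) → ℂ))
    (hf : ∀ k, DifferentiableOn ℂ (f k) U) :
    ∀ J : Finset (Fin n), ∀ p ∈ U ×ˢ U,
      dK n (Phi n (q + 1) f) J p =
        ∑ i : Fin (q + 2), (-1 : ℂ) ^ (i : ℕ) * Phi n q (merge f i) J p := by
  induction q with
  | zero =>
    have hmem := memK_PhiBoundary hUopen hUconv (differentiableOn_bord hf)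
    exact fun J p hp => dK_Phi_succ_of_dK_eq_zero_of_res_eq_zero hUopen hUconv hf
      (fun I y _ => by rw [hmem.dK_eq_zero]; rfl) hp (by rw [res_PhiBoundary_zero_bord]; rfl)
  | succ q ih =>
    have hmem := memK_PhiBoundary hUopen hUconv (differentiableOn_bord hf)
    have hcycle : ∀ I, Set.EqOn (dK n (PhiBoundary n (q + 1) (bord f)) I) 0 (U ×ˢ U) := by
      intro I y hy
      simp only [dK_PhiBoundary,
        fun i => ih _ (differentiableOn_merge (differentiableOn_bord hf) i) I y hy]
      exact alternatingSum_merge_merge (bord f) fun g => Phi n q g I y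
    exact fun J p hp => dK_Phi_succ_of_dK_eq_zero_of_res_eq_zero hUopen hUconv hf hcycle hp
      (by rw [hmem.res_eq_zero]; rfl)

end TwistedKoszul
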